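/- Let Δ₄ be the convex hull of {(3,0),(0,3),(−3,0),(0,−3)} in ℝ² and let k ≥ 1 be an integer. For every W₄-invariant function g ∈ PL(Δ₄;k) one has (1/vol(kΔ₄))·∫_{kΔ₄} g dA ≥ (1/|kΔ₄ ∩ ℤ²|)·Σ_{x ∈ kΔ₄ ∩ ℤ²} g(x), with equality if and only if g is affine on kΔ₄. -/

import Mathlib

open MeasureTheory Pointwise

noncomputable section

/-- The lattice points of `ℝ²`: points with integer coordinates. -/
def lat : Set (ℝ × ℝ) := {x | ∃ m n : ℤ, x = ((m : ℝ), (n : ℝ))}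

/-- `g` belongs to `PL(Δ;k)` (with `D = kΔ`): there is `φ` on the lattice points of `D`
such that `g x` is the height of the upper boundary of the convex hull of the subgraphs. -/
def IsPL (D : Set (ℝ × ℝ)) (g : ℝ × ℝ → ℝ) : Prop :=
  ∃ φ : ℝ × ℝ → ℝ, ∀ x ∈ D,
    g x = sSup {t : ℝ |
      (x, t) ∈ convexHull ℝ {p : (ℝ × ℝ) × ℝ | p.1 ∈ D ∩ lat ∧ p.2 ≤ φ p.1}}

/-- `g` is affine on `D`: restriction of a linear map plus a constant. -/
def IsAffineOn (D : Set (ℝ × ℝ)) (g : ℝ × ℝ → ℝ) : Prop :=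
  ∃ (l : (ℝ × ℝ) →ₗ[ℝ] ℝ) (c : ℝ), ∀ x ∈ D, g x = l x + c

/-- The moment polytope of the intersection of two quadrics `X₄`. -/
def Δ₄ : Set (ℝ × ℝ) := convexHull ℝ {((3 : ℝ), (0 : ℝ)), (0, 3), (-3, 0), (0, -3)}

/-- The generator `[[0,-1],[1,0]]` of the Weyl group `W₄`, acting on `ℝ²`. -/
def σ₄ : ℝ × ℝ → ℝ × ℝ := fun p => (-p.2, p.1)

/-- The swap `[[0,1],[1,0]]`, the second generator of `W₄`. -/
def sw : ℝ × ℝ → ℝ × ℝ := fun p => (p.2, p.1)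

/-!
Both averages are invariant under adding a constant to `g`, so let `g` vanish at the vertices of
the diamond `kΔ₄` of radius `N = 3k`, where it is minimal. By symmetry it suffices to integrate over
the first quadrant, which is tiled by unit squares. On a square inside the diamond `g` dominates its
interpolation on the two triangles separated by the main diagonal; on a square cut by the boundary
it dominates the interpolation on the lower left triangle. The resulting quadrature rule differs
from the lattice sum by a combination of the value at the origin and of the sums of `g` over the two
outermost shells `i + j = const`. The symmetries and concavity make the means over the shells
decrease, which bounds the lattice sum below by the same three quantities. Since all these rules are
exact for constants, the two averages differ by at least a positive multiple of `g(0) - g(N, 0)`: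
this gives the inequality, and equality forces `g(0) = g(N, 0)`, that is, `g` to be constant.
-/

open Finset (range)
open Finset.HasAntidiagonal (antidiagonal mem_antidiagonal)

section ShellSums

variable {f : ℕ → ℕ → ℝ} {n : ℕ}

/-- The sum of `f` over the shell `i + j = n` of the first quadrant. -/
def shellSum (f : ℕ → ℕ → ℝ) (n : ℕ) : ℝ := ∑ p ∈ antidiagonal n, f p.1 p.2

/-- The mean of `f` over the `n + 1` points of the shell `i + j = n`. -/
def shellMean (f : ℕ → ℕ → ℝ) (n : ℕ) : ℝ := shellSum f n / (n + 1)

/-- The sum over the lattice points of the diamond of radius `N` of the function that agrees with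
`f` on the first quadrant and is invariant under the rotation by a right angle: apart from the
origin, the diamond consists of four rotated copies of `{(i, j) | 0 ≤ i, 0 < j, i + j ≤ N}`. -/
def diamondSum (f : ℕ → ℕ → ℝ) (N : ℕ) : ℝ :=
  f 0 0 + 4 * ∑ j ∈ range N, ∑ p ∈ antidiagonal j, f p.1 (p.2 + 1)

lemma shellSum_eq_mul_shellMean (f : ℕ → ℕ → ℝ) (n : ℕ) :
    shellSum f n = (n + 1) * shellMean f n := by
  unfold shellMean
  field_simp

lemma shellMean_zero (f : ℕ → ℕ → ℝ) : shellMean f 0 = f 0 0 := by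
  simp [shellMean, shellSum]

lemma shellSum_succ (f : ℕ → ℕ → ℝ) (n : ℕ) :
    shellSum f (n + 1) = f 0 (n + 1) + ∑ p ∈ antidiagonal n, f (p.1 + 1) p.2 :=
  Finset.Nat.sum_antidiagonal_succ (f := fun p ↦ f p.1 p.2)

lemma shellSum_succ' (f : ℕ → ℕ → ℝ) (n : ℕ) :
    shellSum f (n + 1) = f (n + 1) 0 + ∑ p ∈ antidiagonal n, f p.1 (p.2 + 1) :=
  Finset.Nat.sum_antidiagonal_succ' (f := fun p ↦ f p.1 p.2)

lemma diamondSum_succ (f : ℕ → ℕ → ℝ) (N : ℕ) :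
    diamondSum f (N + 1) = diamondSum f N + 4 * ∑ p ∈ antidiagonal N, f p.1 (p.2 + 1) := by
  rw [diamondSum, Finset.sum_range_succ, diamondSum]
  ring

lemma diamondSum_one (N : ℕ) : diamondSum (fun _ _ ↦ 1) N = 2 * N ^ 2 + 2 * N + 1 := by
  induction N with
  | zero => simp [diamondSum]
  | succ N ih =>
    rw [diamondSum_succ, ih]
    simp only [Finset.sum_const, Finset.Nat.card_antidiagonal, nsmul_eq_mul]
    push_cast
    ring

-- Each point of shell `n + 1` is weighted by its coordinates: `n + 1 = i + j` is distributed over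
-- the two neighbours `(i - 1, j)` and `(i, j - 1)` in shell `n`.
lemma succ_mul_shellSum_succ (f : ℕ → ℕ → ℝ) (n : ℕ) :
    (n + 1) * shellSum f (n + 1) =
      ∑ p ∈ antidiagonal n, ((p.1 + 1) * f (p.1 + 1) p.2 + (p.2 + 1) * f p.1 (p.2 + 1)) := by
  have hfst := shellSum_succ (fun i j ↦ i * f i j) n
  have hsnd := shellSum_succ' (fun i j ↦ j * f i j) n
  have hsum : (n + 1) * shellSum f (n + 1) =
      shellSum (fun i j ↦ i * f i j) (n + 1) + shellSum (fun i j ↦ j * f i j) (n + 1) := by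
    simp only [shellSum, Finset.mul_sum, ← Finset.sum_add_distrib, ← add_mul]
    refine Finset.sum_congr rfl fun p hp ↦ ?_
    rw [← Nat.cast_add, mem_antidiagonal.1 hp, Nat.cast_succ]
  rw [hsum, hfst, hsnd, Finset.sum_add_distrib]
  simp

lemma shellMean_succ_le_shellMean (hfst : ∀ i j, i + j = n → f (i + 1) j ≤ f i j)
    (hsnd : ∀ i j, i + j = n → f i (j + 1) ≤ f i j) :
    shellMean f (n + 1) ≤ shellMean f n := by
  have hshell : (n + 1) * shellSum f (n + 1) ≤ (n + 2) * shellSum f n := by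
    rw [succ_mul_shellSum_succ, shellSum, Finset.mul_sum]
    refine Finset.sum_le_sum fun p hp ↦ ?_
    have hp := mem_antidiagonal.1 hp
    calc (p.1 + 1) * f (p.1 + 1) p.2 + (p.2 + 1) * f p.1 (p.2 + 1)
        ≤ (p.1 + 1) * f p.1 p.2 + (p.2 + 1) * f p.1 p.2 := by
          gcongr
          exacts [hfst _ _ hp, hsnd _ _ hp]
      _ = (n + 2) * f p.1 p.2 := by
          rw [← hp]
          push_cast
          ring
  rw [shellMean, shellMean, div_le_div_iff₀ (by positivity) (by positivity)]
  push_cast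
  linarith

lemma succ_mul_shellMean_succ_le
    (hcorner : ∀ i j, i + j = n + 1 → f (n + 1) 0 ≤ f i j) :
    (n + 1) * shellMean f (n + 1) ≤ ∑ p ∈ antidiagonal n, f p.1 (p.2 + 1) := by
  have hopen : (n + 1) * f (n + 1) 0 ≤ ∑ p ∈ antidiagonal n, f p.1 (p.2 + 1) := by
    have := Finset.card_nsmul_le_sum (antidiagonal n) (fun p ↦ f p.1 (p.2 + 1)) (f (n + 1) 0)
      fun p hp ↦ hcorner _ _ (by have := mem_antidiagonal.1 hp; omega)
    simpa using this
  refine le_of_mul_le_mul_left ?_ (by positivity : (0 : ℝ) < n + 2)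
  calc (n + 2) * ((n + 1) * shellMean f (n + 1))
      = (n + 1) * shellSum f (n + 1) := by
        rw [shellSum_eq_mul_shellMean]
        push_cast
        ring
    _ = (n + 1) * f (n + 1) 0 + (n + 1) * ∑ p ∈ antidiagonal n, f p.1 (p.2 + 1) := by
        rw [shellSum_succ', mul_add]
    _ ≤ (n + 2) * ∑ p ∈ antidiagonal n, f p.1 (p.2 + 1) := by linarith

end ShellSums

section QuadratureRule

variable {f : ℕ → ℕ → ℝ} {n : ℕ}

/-- The integral over the unit cell with lower left corner `p` of the interpolation of `f` that is
affine on both sides of the diagonal in direction `(1, 1)`. -/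
def cellRule (f : ℕ → ℕ → ℝ) (p : ℕ × ℕ) : ℝ :=
  (f p.1 p.2 + f (p.1 + 1) (p.2 + 1)) / 3 + (f (p.1 + 1) p.2 + f p.1 (p.2 + 1)) / 6

/-- The integral over the lower left half of the unit cell with lower left corner `p` of the affine
interpolation of `f`. -/
def triangleRule (f : ℕ → ℕ → ℝ) (p : ℕ × ℕ) : ℝ :=
  (f p.1 p.2 + f (p.1 + 1) p.2 + f p.1 (p.2 + 1)) / 6

/-- The quadrature rule on the triangle `{(x, y) | 0 ≤ x, 0 ≤ y, x + y ≤ n + 1}`, composed of unit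
cells and of the `n + 1` half cells along the hypotenuse. -/
def quadrantRule (f : ℕ → ℕ → ℝ) (n : ℕ) : ℝ :=
  ∑ m ∈ range n, ∑ p ∈ antidiagonal m, cellRule f p + ∑ p ∈ antidiagonal n, triangleRule f p

lemma four_mul_quadrantRule (hf : ∀ j ≤ n + 1, f j 0 = f 0 j) :
    4 * quadrantRule f n = diamondSum f (n + 1) + f 0 0 / 3 - 2 / 3 * shellSum f n -
      4 / 3 * shellSum f (n + 1) := by
  induction n with
  | zero =>
    have hrule : quadrantRule f 0 = (f 0 0 + f 1 0 + f 0 1) / 6 := by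
      simp [quadrantRule, triangleRule]
    have hdiamond : diamondSum f 1 = f 0 0 + 4 * f 0 1 := by simp [diamondSum]
    have hshell₀ : shellSum f 0 = f 0 0 := by simp [shellSum]
    have hshell₁ : shellSum f 1 = f 0 1 + f 1 0 := by
      simp [shellSum, Finset.Nat.antidiagonal_succ]
    rw [hrule, hdiamond, hshell₀, hshell₁, hf 1 le_rfl]
    ring
  | succ n ih =>
    have hshell₁ := shellSum_succ f n
    have hshell₁' := shellSum_succ' f n
    have hshell₂ := shellSum_succ f (n + 1)
    have hshell₂' := shellSum_succ' f (n + 1)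
    have hinner : ∑ p ∈ antidiagonal (n + 1), f p.1 (p.2 + 1) =
        f 0 (n + 2) + ∑ p ∈ antidiagonal n, f (p.1 + 1) (p.2 + 1) :=
      shellSum_succ (fun i j ↦ f i (j + 1)) n
    have hends₁ := hf (n + 1) (by omega)
    have hends₂ := hf (n + 2) le_rfl
    specialize ih fun j hj ↦ hf j (by omega)
    rw [diamondSum_succ]
    simp only [quadrantRule, Finset.sum_range_succ, cellRule, triangleRule, ← Finset.sum_div,
      Finset.sum_add_distrib] at ih ⊢
    simp only [shellSum] at *
    linarith

end QuadratureRule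

/-- The shape of the values `f i j = g (i, j)` that a concave function `g`, invariant under the
symmetries of the square, takes at the lattice points of the first quadrant of the diamond of
radius `N`. -/
structure IsDiamondProfile (f : ℕ → ℕ → ℝ) (N : ℕ) : Prop where
  symm : ∀ i j, i + j ≤ N → f i j = f j i
  succ_le : ∀ i j, i + j < N → f (i + 1) j ≤ f i j
  corner_le : ∀ i j, i + j ≤ N → f (i + j) 0 ≤ f i j

namespace IsDiamondProfile

variable {f : ℕ → ℕ → ℝ} {n N : ℕ}

lemma mono {M : ℕ} (hf : IsDiamondProfile f N) (h : M ≤ N) : IsDiamondProfile f M where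
  symm i j hij := hf.symm i j (hij.trans h)
  succ_le i j hij := hf.succ_le i j (hij.trans_le h)
  corner_le i j hij := hf.corner_le i j (hij.trans h)

lemma succ_le' (hf : IsDiamondProfile f N) {i j : ℕ} (h : i + j < N) :
    f i (j + 1) ≤ f i j := by
  rw [hf.symm i j h.le, hf.symm i (j + 1) (by omega)]
  exact hf.succ_le j i (by omega)

lemma le_zero (hf : IsDiamondProfile f N) {i j : ℕ} (h : i + j ≤ N) : f i j ≤ f 0 0 := by
  induction i generalizing j with
  | zero =>
    induction j with
    | zero => exact le_rfl
    | succ j ih => exact (hf.succ_le' (by omega)).trans (ih (by omega))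
  | succ i ih => exact (hf.succ_le i j (by omega)).trans (ih (by omega))

lemma shellMean_succ_le (hf : IsDiamondProfile f (n + 1)) :
    shellMean f (n + 1) ≤ shellMean f n :=
  shellMean_succ_le_shellMean (fun _ _ h ↦ hf.succ_le _ _ (by omega))
    fun _ _ h ↦ hf.succ_le' (by omega)

lemma shellMean_le_zero (hf : IsDiamondProfile f N) : shellMean f N ≤ f 0 0 := by
  induction N with
  | zero => exact (shellMean_zero f).le
  | succ N ih => exact hf.shellMean_succ_le.trans (ih (hf.mono N.le_succ))

lemma shellMean_le_corner (hf : IsDiamondProfile f (n + 1)) :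
    (n + 2) * shellMean f (n + 1) ≤ f (n + 1) 0 + (n + 1) * f 0 0 := by
  have hopen : ∑ p ∈ antidiagonal n, f p.1 (p.2 + 1) ≤ (n + 1) * f 0 0 := by
    have := Finset.sum_le_card_nsmul (antidiagonal n) (fun p ↦ f p.1 (p.2 + 1)) (f 0 0)
      fun p hp ↦ hf.le_zero (by have := mem_antidiagonal.1 hp; omega)
    simpa using this
  have hshell := shellSum_eq_mul_shellMean f (n + 1)
  rw [shellSum_succ'] at hshell
  push_cast at hshell
  linarith

lemma le_diamondSum_succ_of_le (hf : IsDiamondProfile f (n + 1)) {b : ℝ}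
    (h : b ≤ diamondSum f n) : b + 4 * (n + 1) * shellMean f (n + 1) ≤ diamondSum f (n + 1) := by
  have := succ_mul_shellMean_succ_le fun i j hij ↦ hij ▸ hf.corner_le i j hij.le
  rw [diamondSum_succ]
  linarith

lemma le_diamondSum (hf : IsDiamondProfile f N) :
    f 0 0 + 2 * N * (N + 1) * shellMean f N ≤ diamondSum f N := by
  induction N with
  | zero => simp [diamondSum]
  | succ N ih =>
    calc f 0 0 + 2 * (N + 1 : ℕ) * ((N + 1 : ℕ) + 1) * shellMean f (N + 1)
        = f 0 0 + 2 * N * (N + 1) * shellMean f (N + 1) +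
            4 * (N + 1) * shellMean f (N + 1) := by
          push_cast
          ring
      _ ≤ f 0 0 + 2 * N * (N + 1) * shellMean f N + 4 * (N + 1) * shellMean f (N + 1) := by
          gcongr
          exact hf.shellMean_succ_le
      _ ≤ diamondSum f (N + 1) := hf.le_diamondSum_succ_of_le (ih (hf.mono N.le_succ))

-- With `a = f 0 0`, `c = shellMean f n` and `d = shellMean f (n + 1)`, the lower bound for
-- `diamondSum f (n + 1)` leaves a combination of `a`, `c`, `d` that vanishes on constants, both
-- rules being exact there, hence a combination of `a - c` and `c - d`.
theorem quadrantRule_stability (hf : IsDiamondProfile f (n + 1)) :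
    4 / 3 * (f 0 0 - f (n + 1) 0) / (n + 2) ≤
      (2 * (n + 1) ^ 2 + 2 * (n + 1) + 1) * (4 * quadrantRule f n) -
        2 * (n + 1) ^ 2 * diamondSum f (n + 1) := by
  have hrule := four_mul_quadrantRule fun j hj ↦ hf.symm j 0 hj
  rw [shellSum_eq_mul_shellMean f n, shellSum_eq_mul_shellMean f (n + 1)] at hrule
  push_cast at hrule
  have hsum := hf.le_diamondSum_succ_of_le (hf.mono n.le_succ).le_diamondSum
  have hcorner := hf.shellMean_le_corner
  have hac : 0 ≤ f 0 0 - shellMean f n := sub_nonneg.2 (hf.mono n.le_succ).shellMean_le_zero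
  have hcd : 0 ≤ shellMean f n - shellMean f (n + 1) := sub_nonneg.2 hf.shellMean_succ_le
  rw [hrule]
  generalize f 0 0 = a, f (n + 1) 0 = v, shellMean f n = c, shellMean f (n + 1) = d,
    diamondSum f (n + 1) = L at *
  have hx : (0 : ℝ) ≤ n := n.cast_nonneg
  generalize (n : ℝ) = x at *
  calc 4 / 3 * (a - v) / (x + 2)
      ≤ 4 / 3 * ((a - c) + (c - d)) := by
        rw [div_le_iff₀ (by positivity)]
        linarith
    _ ≤ (2 / 3 * x ^ 2 + 4 * x + 14 / 3) * (a - c) +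
          (8 / 3 * x ^ 3 + 16 / 3 * x ^ 2 + 8 / 3 * x + 4 / 3) * (c - d) := by
        rw [mul_add]
        gcongr
        · linarith [sq_nonneg x]
        · exact le_add_of_nonneg_left (by positivity)
    _ = (2 * x + 3) * (a + 2 * x * (x + 1) * c + 4 * (x + 1) * d) +
          (2 * (x + 1) ^ 2 + 2 * (x + 1) + 1) *
            (a / 3 - 2 / 3 * ((x + 1) * c) - 4 / 3 * ((x + 2) * d)) := by
        ring
    _ ≤ (2 * x + 3) * L + (2 * (x + 1) ^ 2 + 2 * (x + 1) + 1) *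
            (a / 3 - 2 / 3 * ((x + 1) * c) - 4 / 3 * ((x + 2) * d)) := by
        gcongr
    _ = _ := by ring

end IsDiamondProfile

section Diamond

variable {r : ℝ}

/-- The closed ball of radius `r` of the `ℓ¹` norm on the plane. -/
def diamond (r : ℝ) : Set (ℝ × ℝ) := {p | |p.1| + |p.2| ≤ r}

lemma mem_diamond {p : ℝ × ℝ} : p ∈ diamond r ↔ |p.1| + |p.2| ≤ r := Iff.rfl

lemma mk_mem_diamond_of_nonneg {x y : ℝ} (hx : 0 ≤ x) (hy : 0 ≤ y) :
    (x, y) ∈ diamond r ↔ x + y ≤ r := by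
  rw [mem_diamond, abs_of_nonneg hx, abs_of_nonneg hy]

lemma zero_mem_diamond : (0 : ℝ × ℝ) ∈ diamond r ↔ 0 ≤ r := by
  simp [mem_diamond]

lemma neg_mem_diamond {p : ℝ × ℝ} : -p ∈ diamond r ↔ p ∈ diamond r := by
  simp [mem_diamond]

lemma convex_diamond (r : ℝ) : Convex ℝ (diamond r) := by
  have hnorm : ConvexOn ℝ Set.univ fun x : ℝ ↦ |x| := convexOn_univ_norm
  have := ((hnorm.comp_linearMap (LinearMap.fst ℝ ℝ ℝ)).add
    (hnorm.comp_linearMap (LinearMap.snd ℝ ℝ ℝ))).convex_le r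
  simpa [diamond] using this

lemma isCompact_diamond (r : ℝ) : IsCompact (diamond r) := by
  refine (isCompact_closedBall (0 : ℝ × ℝ) r).of_isClosed_subset
    (isClosed_le (by fun_prop) continuous_const) fun p hp ↦ ?_
  rw [mem_closedBall_zero_iff, Prod.norm_def]
  exact max_le (by linarith [mem_diamond.1 hp, abs_nonneg p.2, Real.norm_eq_abs p.1])
    (by linarith [mem_diamond.1 hp, abs_nonneg p.1, Real.norm_eq_abs p.2])

lemma diamond_eq_convexHull (hr : 0 < r) :
    diamond r = convexHull ℝ {(r, 0), (0, r), (-r, 0), (0, -r)} := by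
  refine Set.Subset.antisymm ?_ (convexHull_min ?_ (convex_diamond r))
  · rintro ⟨x, y⟩ h
    rw [mem_diamond] at h
    let weight : Fin 4 → ℝ := ![|x| + x, |y| + y, |x| - x, |y| - y]
    let vertex : Fin 4 → ℝ × ℝ := ![(r, 0), (0, r), (-r, 0), (0, -r)]
    have hweight : ∀ i ∈ Finset.univ,
        0 ≤ weight i / (2 * r) + (r - |x| - |y|) / (4 * r) := by
      intro i _
      have hi : 0 ≤ weight i := by
        fin_cases i <;> simp [weight, le_abs_self, ← neg_le_iff_add_nonneg', neg_abs_le]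
      have hrest : 0 ≤ r - |x| - |y| := by linarith
      positivity
    have hsum : ∑ i, (weight i / (2 * r) + (r - |x| - |y|) / (4 * r)) = 1 := by
      simp only [Fin.sum_univ_four, weight, Matrix.cons_val]
      field_simp
      ring
    have hcomb : ∑ i, (weight i / (2 * r) + (r - |x| - |y|) / (4 * r)) • vertex i = (x, y) := by
      simp only [Fin.sum_univ_four, weight, vertex, Matrix.cons_val]
      simp only [Prod.smul_mk, smul_eq_mul, mul_zero, Prod.mk_add_mk, add_zero, zero_add, mul_neg]
      ext <;> field_simp <;> ring
    rw [← hcomb]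
    refine (convex_convexHull ℝ _).sum_mem hweight hsum fun i _ ↦ subset_convexHull ℝ _ ?_
    fin_cases i <;> simp [vertex]
  · rintro p (rfl | rfl | rfl | rfl) <;> simp [mem_diamond, abs_of_pos hr]

lemma smul_diamond {c : ℝ} (hc : 0 < c) (r : ℝ) : c • diamond r = diamond (c * r) := by
  ext p
  simp only [Set.mem_smul_set_iff_inv_smul_mem₀ hc.ne', mem_diamond, Prod.smul_fst, Prod.smul_snd,
    smul_eq_mul, abs_mul, abs_inv, abs_of_pos hc, ← mul_add, inv_mul_le_iff₀ hc]

lemma smul_Δ₄ {k : ℕ} (hk : 1 ≤ k) : (k : ℝ) • Δ₄ = diamond (3 * k : ℕ) := by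
  rw [Δ₄, ← diamond_eq_convexHull three_pos, smul_diamond (by positivity), mul_comm]
  norm_cast

lemma volume_real_diamond (hr : 0 ≤ r) : volume.real (diamond r) = 2 * r ^ 2 := by
  let rot : (ℝ × ℝ) →ₗ[ℝ] (ℝ × ℝ) :=
    Matrix.toLin (Module.Basis.finTwoProd ℝ) (Module.Basis.finTwoProd ℝ) !![1, 1; 1, -1]
  have hdet : LinearMap.det rot = -2 := by
    simp only [rot, LinearMap.det_toLin, Matrix.det_fin_two_of]
    norm_num
  have hpre : diamond r = rot ⁻¹' (Set.Icc (-r) r ×ˢ Set.Icc (-r) r) := by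
    ext ⟨x, y⟩
    simp only [rot, mem_diamond, Set.mem_preimage, Matrix.toLin_finTwoProd_apply, Set.mem_prod,
      Set.mem_Icc]
    rcases abs_cases x with ⟨hx, _⟩ | ⟨hx, _⟩ <;> rcases abs_cases y with ⟨hy, _⟩ | ⟨hy, _⟩ <;>
      rw [hx, hy] <;> grind
  rw [measureReal_def, hpre, Measure.addHaar_preimage_linearMap _ (by rw [hdet]; norm_num), hdet,
    Measure.volume_eq_prod, Measure.prod_prod, Real.volume_Icc, ENNReal.toReal_mul,
    ENNReal.toReal_mul, ENNReal.toReal_ofReal (by positivity), ENNReal.toReal_ofReal (by linarith)]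
  norm_num
  ring

end Diamond

section LatticePoints

variable {N : ℕ}

/-- The points with integer coordinates in the diamond of radius `N`. -/
def intDiamond (N : ℕ) : Finset (ℤ × ℤ) :=
  {p ∈ Finset.Icc (-N : ℤ) N ×ˢ Finset.Icc (-N : ℤ) N | |p.1| + |p.2| ≤ N}

lemma mem_intDiamond {p : ℤ × ℤ} : p ∈ intDiamond N ↔ |p.1| + |p.2| ≤ N := by
  simp only [intDiamond, Finset.mem_filter, Finset.mem_product, Finset.mem_Icc, ← abs_le,
    and_iff_right_iff_imp]
  exact fun h ↦ ⟨(le_add_of_nonneg_right (abs_nonneg _)).trans h,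
    (le_add_of_nonneg_left (abs_nonneg _)).trans h⟩

/-- The embedding of `ℤ²` into `ℝ²`. -/
def latticePoint (p : ℤ × ℤ) : ℝ × ℝ := (p.1, p.2)

lemma latticePoint_injective : Function.Injective latticePoint := by
  rintro ⟨a, b⟩ ⟨c, d⟩ h
  simpa [latticePoint] using h

lemma latticePoint_mem_diamond {p : ℤ × ℤ} : latticePoint p ∈ diamond N ↔ p ∈ intDiamond N := by
  rw [mem_diamond, mem_intDiamond]
  dsimp only [latticePoint]
  norm_cast

lemma diamond_inter_lat (N : ℕ) : diamond N ∩ lat = latticePoint '' intDiamond N := by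
  ext x
  constructor
  · rintro ⟨hx, m, n, rfl⟩
    exact ⟨(m, n), latticePoint_mem_diamond.1 hx, rfl⟩
  · rintro ⟨p, hp, rfl⟩
    exact ⟨latticePoint_mem_diamond.2 hp, p.1, p.2, rfl⟩

lemma finsum_mem_diamond_inter_lat (N : ℕ) (g : ℝ × ℝ → ℝ) :
    ∑ᶠ x ∈ diamond N ∩ lat, g x = ∑ p ∈ intDiamond N, g (latticePoint p) := by
  rw [diamond_inter_lat, finsum_mem_image latticePoint_injective.injOn, finsum_mem_coe_finset]

lemma ncard_diamond_inter_lat (N : ℕ) : (diamond N ∩ lat).ncard = (intDiamond N).card := by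
  rw [diamond_inter_lat, Set.ncard_image_of_injective _ latticePoint_injective,
    Set.ncard_coe_finset]

lemma sum_intDiamond_quadrant (N : ℕ) (F : ℤ × ℤ → ℝ) :
    ∑ p ∈ intDiamond N with 0 ≤ p.1 ∧ 0 < p.2, F p =
      ∑ j ∈ range N, ∑ p ∈ antidiagonal j, F (p.1, p.2 + 1) := by
  rw [Finset.sum_sigma']
  refine (Finset.sum_bij' (fun q _ ↦ ((q.2.1 : ℤ), (q.2.2 + 1 : ℤ)))
    (fun p _ ↦ ⟨(p.1 + p.2 - 1).toNat, p.1.toNat, (p.2 - 1).toNat⟩) ?_ ?_ ?_ ?_ ?_).symm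
  · rintro ⟨j, a, b⟩ h
    simp only [Finset.mem_sigma, Finset.mem_range, mem_antidiagonal, Finset.mem_filter,
      mem_intDiamond] at h ⊢
    grind
  · rintro ⟨a, b⟩ h
    simp only [Finset.mem_sigma, Finset.mem_range, mem_antidiagonal, Finset.mem_filter,
      mem_intDiamond] at h ⊢
    grind
  · rintro ⟨j, a, b⟩ h
    simp only [Finset.mem_sigma, mem_antidiagonal] at h
    grind
  · rintro ⟨a, b⟩ h
    simp only [Finset.mem_filter] at h
    grind
  · rintro ⟨j, a, b⟩ -
    rfl

lemma sum_intDiamond_filter_rotate {F : ℤ × ℤ → ℝ}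
    (hF : ∀ p ∈ intDiamond N, F (-p.2, p.1) = F p) {P Q : ℤ × ℤ → Prop} [DecidablePred P]
    [DecidablePred Q] (hPQ : ∀ p, Q (-p.2, p.1) ↔ P p) :
    ∑ p ∈ intDiamond N with Q p, F p = ∑ p ∈ intDiamond N with P p, F p := by
  have hrot : ∀ p : ℤ × ℤ, (-p.2, p.1) ∈ intDiamond N ↔ p ∈ intDiamond N := fun p ↦ by
    rw [mem_intDiamond, mem_intDiamond, abs_neg, add_comm]
  refine (Finset.sum_bij' (fun p _ ↦ (-p.2, p.1)) (fun p _ ↦ (p.2, -p.1)) ?_ ?_ ?_ ?_ ?_).symm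
  · intro p hp
    simpa only [Finset.mem_filter, hrot, hPQ] using hp
  · intro p hp
    simpa only [Finset.mem_filter, ← hrot (p.2, -p.1), ← hPQ, neg_neg] using hp
  · simp
  · simp
  · exact fun p hp ↦ (hF p (Finset.mem_filter.1 hp).1).symm

lemma sum_intDiamond {F : ℤ × ℤ → ℝ} (hF : ∀ p ∈ intDiamond N, F (-p.2, p.1) = F p) :
    ∑ p ∈ intDiamond N, F p = diamondSum (fun i j ↦ F (i, j)) N := by
  have hupperLeft : ∑ p ∈ intDiamond N with p.1 < 0 ∧ 0 ≤ p.2, F p =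
      ∑ p ∈ intDiamond N with 0 ≤ p.1 ∧ 0 < p.2, F p :=
    sum_intDiamond_filter_rotate hF fun _ ↦ by omega
  have hlowerLeft : ∑ p ∈ intDiamond N with p.1 ≤ 0 ∧ p.2 < 0, F p =
      ∑ p ∈ intDiamond N with p.1 < 0 ∧ 0 ≤ p.2, F p :=
    sum_intDiamond_filter_rotate hF fun _ ↦ by omega
  have hlowerRight : ∑ p ∈ intDiamond N with 0 < p.1 ∧ p.2 ≤ 0, F p =
      ∑ p ∈ intDiamond N with p.1 ≤ 0 ∧ p.2 < 0, F p :=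
    sum_intDiamond_filter_rotate hF fun _ ↦ by omega
  have horigin : ∑ p ∈ intDiamond N with p = (0, 0), F p = F (0, 0) := by
    rw [Finset.sum_filter, Finset.sum_ite_eq', if_pos (by simp [mem_intDiamond])]
  have hsplit : ∑ p ∈ intDiamond N, F p = ∑ p ∈ intDiamond N with p = (0, 0), F p +
      ∑ p ∈ intDiamond N with 0 ≤ p.1 ∧ 0 < p.2, F p +
      ∑ p ∈ intDiamond N with p.1 < 0 ∧ 0 ≤ p.2, F p +
      ∑ p ∈ intDiamond N with p.1 ≤ 0 ∧ p.2 < 0, F p +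
      ∑ p ∈ intDiamond N with 0 < p.1 ∧ p.2 ≤ 0, F p := by
    simp only [Finset.sum_filter, ← Finset.sum_add_distrib]
    refine Finset.sum_congr rfl fun p _ ↦ ?_
    simp only [Prod.ext_iff]
    split_ifs <;> first | (exfalso; omega) | simp
  rw [hsplit, horigin, hlowerRight, hlowerLeft, hupperLeft, sum_intDiamond_quadrant, diamondSum]
  push_cast
  ring

lemma card_intDiamond (N : ℕ) : ((intDiamond N).card : ℝ) = 2 * N ^ 2 + 2 * N + 1 := by
  rw [← diamondSum_one, ← sum_intDiamond (F := fun _ ↦ 1) fun _ _ ↦ rfl]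
  simp

end LatticePoints

section ConcaveEnvelope

lemma concaveOn_sSup_fiber {E : Type*} [AddCommGroup E] [Module ℝ E] {D : Set E}
    {C : Set (E × ℝ)} (hD : Convex ℝ D) (hC : Convex ℝ C)
    (hne : ∀ x ∈ D, {t | (x, t) ∈ C}.Nonempty) (hbdd : ∀ x ∈ D, BddAbove {t | (x, t) ∈ C}) :
    ConcaveOn ℝ D fun x ↦ sSup {t | (x, t) ∈ C} := by
  refine ⟨hD, fun x hx y hy a b ha hb hab ↦ ?_⟩
  have hadd : a • {t | (x, t) ∈ C} + b • {t | (y, t) ∈ C} ⊆ {t | (a • x + b • y, t) ∈ C} := by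
    rintro _ ⟨_, ⟨s, hs, rfl⟩, _, ⟨t, ht, rfl⟩, rfl⟩
    exact hC hs ht ha hb hab
  rw [← Real.sSup_smul_of_nonneg ha, ← Real.sSup_smul_of_nonneg hb,
    ← csSup_add ((hne x hx).smul_set) ((hbdd x hx).smul_of_nonneg ha) ((hne y hy).smul_set)
      ((hbdd y hy).smul_of_nonneg hb)]
  exact csSup_le_csSup (hbdd _ (hD hx hy ha hb hab))
    (((hne x hx).smul_set).add ((hne y hy).smul_set)) hadd

lemma bddAbove_fiber_convexHull {E : Type*} [AddCommGroup E] [Module ℝ E] {S : Set E}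
    (hS : S.Finite) (φ : E → ℝ) (x : E) :
    BddAbove {t | (x, t) ∈ convexHull ℝ {p : E × ℝ | p.1 ∈ S ∧ p.2 ≤ φ p.1}} := by
  obtain ⟨B, hB⟩ := (hS.image φ).bddAbove
  have hsub : convexHull ℝ {p : E × ℝ | p.1 ∈ S ∧ p.2 ≤ φ p.1} ⊆ {p | p.2 ≤ B} :=
    convexHull_min (fun p hp ↦ hp.2.trans (hB ⟨_, hp.1, rfl⟩))
      (convex_halfSpace_le (LinearMap.snd ℝ E ℝ).isLinear B)
  exact ⟨B, fun t ht ↦ hsub ht⟩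

lemma nonempty_fiber_convexHull {E : Type*} [AddCommGroup E] [Module ℝ E] {S : Set E}
    (φ : E → ℝ) {x : E} (hx : x ∈ convexHull ℝ S) :
    {t | (x, t) ∈ convexHull ℝ {p : E × ℝ | p.1 ∈ S ∧ p.2 ≤ φ p.1}}.Nonempty := by
  have hfst : S ⊆ LinearMap.fst ℝ E ℝ '' {p : E × ℝ | p.1 ∈ S ∧ p.2 ≤ φ p.1} :=
    fun y hy ↦ ⟨(y, φ y), ⟨hy, le_rfl⟩, rfl⟩
  have := convexHull_mono hfst hx
  rw [← LinearMap.image_convexHull] at this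
  obtain ⟨⟨y, t⟩, ht, rfl⟩ := this
  exact ⟨t, ht⟩

lemma IsPL.concaveOn {D : Set (ℝ × ℝ)} {g : ℝ × ℝ → ℝ} (hg : IsPL D g) (hD : Convex ℝ D)
    (hfin : (D ∩ lat).Finite) (hull : D ⊆ convexHull ℝ (D ∩ lat)) : ConcaveOn ℝ D g := by
  obtain ⟨φ, hφ⟩ := hg
  exact (concaveOn_sSup_fiber hD (convex_convexHull ℝ _)
    (fun x hx ↦ nonempty_fiber_convexHull φ (hull hx))
    fun x _ ↦ bddAbove_fiber_convexHull hfin φ x).congr fun x hx ↦ (hφ x hx).symm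

lemma diamond_subset_convexHull_lat {N : ℕ} (hN : 1 ≤ N) :
    diamond N ⊆ convexHull ℝ (diamond N ∩ lat) := by
  rw [diamond_inter_lat]
  nth_rewrite 1 [diamond_eq_convexHull (by positivity)]
  refine convexHull_mono ?_
  rintro _ (rfl | rfl | rfl | rfl)
  · exact ⟨(N, 0), mem_intDiamond.2 (by simp), by simp [latticePoint]⟩
  · exact ⟨(0, N), mem_intDiamond.2 (by simp), by simp [latticePoint]⟩
  · exact ⟨(-N, 0), mem_intDiamond.2 (by simp), by simp [latticePoint]⟩
  · exact ⟨(0, -N), mem_intDiamond.2 (by simp), by simp [latticePoint]⟩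

lemma IsPL.concaveOn_diamond {N : ℕ} (hN : 1 ≤ N) {g : ℝ × ℝ → ℝ} (hg : IsPL (diamond N) g) :
    ConcaveOn ℝ (diamond N) g :=
  hg.concaveOn (convex_diamond _)
    (diamond_inter_lat N ▸ (intDiamond N).finite_toSet.image latticePoint)
    (diamond_subset_convexHull_lat hN)

end ConcaveEnvelope

section Integrability

variable {E : Type*} [NormedAddCommGroup E] [NormedSpace ℝ E] [FiniteDimensional ℝ E]
  [MeasurableSpace E] [BorelSpace E] {μ : Measure E} [μ.IsAddHaarMeasure] {s : Set E} {f : E → ℝ}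

lemma aestronglyMeasurable_of_concaveOn (hf : ConcaveOn ℝ s f) :
    AEStronglyMeasurable f (μ.restrict s) := by
  have hinterior : interior s =ᵐ[μ] s :=
    interior_ae_eq_of_null_frontier (hf.1.addHaar_frontier μ)
  rw [← Measure.restrict_congr_set hinterior]
  exact hf.continuousOn_interior.aestronglyMeasurable isOpen_interior.measurableSet

lemma integrableOn_of_concaveOn_of_bounded (hf : ConcaveOn ℝ s f) (hs : μ s ≠ ⊤) {C : ℝ}
    (hC : ∀ x ∈ s, ‖f x‖ ≤ C) : IntegrableOn f s μ := by
  refine IntegrableOn.of_bound hs.lt_top (aestronglyMeasurable_of_concaveOn hf) C ?_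
  exact (ae_restrict_iff'₀ (hf.1.nullMeasurableSet μ)).2 (.of_forall hC)

end Integrability

section UnitCell

/-- The half-open unit square, a fundamental domain for the translations by `ℤ²`. -/
def unitCell : Set (ℝ × ℝ) := Set.Ioc 0 1 ×ˢ Set.Ioc 0 1

lemma measurableSet_unitCell : MeasurableSet unitCell := measurableSet_Ioc.prod measurableSet_Ioc

lemma setIntegral_unitCell {f : ℝ × ℝ → ℝ} (hf : IntegrableOn f unitCell) :
    ∫ x in unitCell, f x = ∫ s in (0 : ℝ)..1, ∫ t in (0 : ℝ)..1, f (s, t) := by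
  rw [unitCell, Measure.volume_eq_prod, setIntegral_prod f hf,
    intervalIntegral.integral_of_le zero_le_one]
  simp only [intervalIntegral.integral_of_le zero_le_one]

lemma integrableOn_unitCell_of_continuous {f : ℝ × ℝ → ℝ} (hf : Continuous f) :
    IntegrableOn f unitCell :=
  (hf.continuousOn.integrableOn_compact (isCompact_Icc.prod isCompact_Icc)).mono_set
    (Set.prod_mono Set.Ioc_subset_Icc_self Set.Ioc_subset_Icc_self)

lemma intervalIntegral_min_left {s : ℝ} (h₀ : 0 ≤ s) (h₁ : s ≤ 1) :
    ∫ t in (0 : ℝ)..1, min s t = s - s ^ 2 / 2 := by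
  have hint : ∀ a b, IntervalIntegrable (fun t ↦ min s t) volume a b := fun a b ↦
    (by fun_prop : Continuous fun t ↦ min s t).intervalIntegrable a b
  have hleft : ∫ t in (0 : ℝ)..s, min s t = ∫ t in (0 : ℝ)..s, t :=
    intervalIntegral.integral_congr fun t ht ↦
      min_eq_right (by rw [Set.uIcc_of_le h₀] at ht; exact ht.2)
  have hright : ∫ t in s..1, min s t = ∫ _ in s..1, s :=
    intervalIntegral.integral_congr fun t ht ↦
      min_eq_left (by rw [Set.uIcc_of_le h₁] at ht; exact ht.1)
  rw [← intervalIntegral.integral_add_adjacent_intervals (hint 0 s) (hint s 1), hleft, hright]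
  simp only [integral_id, ne_eq, OfNat.ofNat_ne_zero, not_false_eq_true, zero_pow, sub_zero,
    intervalIntegral.integral_const, smul_eq_mul]
  ring

lemma setIntegral_unitCell_interpolation (a b c d : ℝ) :
    ∫ x in unitCell, (a + x.1 * (b - a) + x.2 * (c - a) + min x.1 x.2 * (a + d - b - c)) =
      (a + d) / 3 + (b + c) / 6 := by
  rw [setIntegral_unitCell (integrableOn_unitCell_of_continuous (by fun_prop))]
  have hinner : ∀ s ∈ Set.uIcc (0 : ℝ) 1, ∫ t in (0 : ℝ)..1,
      (a + s * (b - a) + t * (c - a) + min s t * (a + d - b - c)) =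
        (a + (c - a) / 2) + s * (d - c) - s ^ 2 * ((a + d - b - c) / 2) := by
    intro s hs
    rw [Set.uIcc_of_le zero_le_one] at hs
    rw [intervalIntegral.integral_add (Continuous.intervalIntegrable (by fun_prop) _ _)
      (Continuous.intervalIntegrable (by fun_prop) _ _), intervalIntegral.integral_mul_const,
      intervalIntegral_min_left hs.1 hs.2]
    simp only [intervalIntegrable_const, intervalIntegral.intervalIntegrable_id,
      IntervalIntegrable.mul_const, intervalIntegral.integral_add, intervalIntegral.integral_const,
      sub_zero, smul_eq_mul, one_mul, intervalIntegral.integral_const_mul,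
      intervalIntegral.integral_sub, intervalIntegral.integral_mul_const, integral_id, one_pow,
      ne_eq, OfNat.ofNat_ne_zero, not_false_eq_true, zero_pow, one_div]
    ring
  rw [intervalIntegral.integral_congr hinner,
    intervalIntegral.integral_sub (Continuous.intervalIntegrable (by fun_prop) _ _)
      (Continuous.intervalIntegrable (by fun_prop) _ _)]
  simp only [intervalIntegrable_const, intervalIntegral.intervalIntegrable_id,
    IntervalIntegrable.mul_const, intervalIntegral.integral_add, intervalIntegral.integral_const,
    sub_zero, smul_eq_mul, one_mul, intervalIntegral.integral_div, intervalIntegral.integral_sub,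
    intervalIntegral.integral_mul_const, integral_id, one_pow, ne_eq, OfNat.ofNat_ne_zero,
    not_false_eq_true, zero_pow, one_div, integral_pow, Nat.reduceAdd, Nat.cast_ofNat]
  ring

lemma le_map_add_add_of_concaveOn {E : Type*} [AddCommGroup E] [Module ℝ E] {D : Set E}
    {f : E → ℝ} (hf : ConcaveOn ℝ D f) {x y z : E} (hx : x ∈ D) (hy : y ∈ D) (hz : z ∈ D)
    {a b c : ℝ} (ha : 0 ≤ a) (hb : 0 ≤ b) (hc : 0 ≤ c) (habc : a + b + c = 1) :
    a * f x + b * f y + c * f z ≤ f (a • x + b • y + c • z) := by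
  have := hf.le_map_sum (t := Finset.univ) (w := ![a, b, c]) (p := ![x, y, z])
    (by simp [Fin.forall_fin_succ, ha, hb, hc]) (by simpa [Fin.sum_univ_three] using habc)
    (by simp [Fin.forall_fin_succ, hx, hy, hz])
  simpa [Fin.sum_univ_three] using this

lemma interpolation_le_of_concaveOn {f : ℝ × ℝ → ℝ}
    (hf : ConcaveOn ℝ (Set.Icc 0 1 ×ˢ Set.Icc 0 1) f) {s t : ℝ} (hs : s ∈ Set.Icc (0 : ℝ) 1)
    (ht : t ∈ Set.Icc (0 : ℝ) 1) :
    f (0, 0) + s * (f (1, 0) - f (0, 0)) + t * (f (0, 1) - f (0, 0)) +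
      min s t * (f (0, 0) + f (1, 1) - f (1, 0) - f (0, 1)) ≤ f (s, t) := by
  rcases le_total s t with hst | hts
  · have := le_map_add_add_of_concaveOn hf (x := (0, 0)) (y := (0, 1)) (z := (1, 1)) (by simp)
      (by simp) (by simp) (sub_nonneg.2 ht.2) (sub_nonneg.2 hst) hs.1 (by ring)
    rw [min_eq_left hst]
    simp only [Prod.smul_mk, Prod.mk_add_mk, smul_eq_mul, mul_zero, mul_one, zero_add,
      sub_add_cancel] at this
    linarith
  · have := le_map_add_add_of_concaveOn hf (x := (0, 0)) (y := (1, 0)) (z := (1, 1)) (by simp)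
      (by simp) (by simp) (sub_nonneg.2 hs.2) (sub_nonneg.2 hts) ht.1 (by ring)
    rw [min_eq_right hts]
    simp only [Prod.smul_mk, Prod.mk_add_mk, smul_eq_mul, mul_zero, mul_one, zero_add,
      sub_add_cancel] at this
    linarith

lemma le_setIntegral_unitCell_of_concaveOn {f : ℝ × ℝ → ℝ}
    (hf : ConcaveOn ℝ (Set.Icc 0 1 ×ˢ Set.Icc 0 1) f) (hint : IntegrableOn f unitCell) :
    (f (0, 0) + f (1, 1)) / 3 + (f (1, 0) + f (0, 1)) / 6 ≤ ∫ x in unitCell, f x := by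
  rw [← setIntegral_unitCell_interpolation]
  exact setIntegral_mono_on (integrableOn_unitCell_of_continuous (by fun_prop)) hint
    measurableSet_unitCell fun x hx ↦ interpolation_le_of_concaveOn hf
      (Set.Ioc_subset_Icc_self hx.1) (Set.Ioc_subset_Icc_self hx.2)

/-- The lower left half of the unit square. -/
def unitTriangle : Set (ℝ × ℝ) := unitCell ∩ {x | x.1 + x.2 ≤ 1}

lemma measurableSet_unitTriangle : MeasurableSet unitTriangle :=
  measurableSet_unitCell.inter (measurableSet_le (by fun_prop) measurable_const)

lemma setIntegral_unitTriangle {f : ℝ × ℝ → ℝ} (hf : Continuous f) :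
    ∫ x in unitTriangle, f x = ∫ s in (0 : ℝ)..1, ∫ t in (0 : ℝ)..(1 - s), f (s, t) := by
  have hmeas : MeasurableSet {x : ℝ × ℝ | x.1 + x.2 ≤ 1} :=
    measurableSet_le (by fun_prop) measurable_const
  rw [unitTriangle, ← setIntegral_indicator hmeas, setIntegral_unitCell
    ((integrableOn_unitCell_of_continuous hf).indicator hmeas)]
  refine intervalIntegral.integral_congr fun s hs ↦ ?_
  rw [Set.uIcc_of_le zero_le_one] at hs
  rw [← intervalIntegral.integral_indicator (a₂ := 1 - s) (a₃ := 1)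
    ⟨sub_nonneg.2 hs.2, sub_le_self _ hs.1⟩]
  simp only [Set.indicator, Set.mem_ofPred_eq, le_sub_iff_add_le']

lemma setIntegral_unitTriangle_interpolation (a b c : ℝ) :
    ∫ x in unitTriangle, (a + x.1 * (b - a) + x.2 * (c - a)) = (a + b + c) / 6 := by
  rw [setIntegral_unitTriangle (by fun_prop)]
  have hinner : ∀ s ∈ Set.uIcc (0 : ℝ) 1, ∫ t in (0 : ℝ)..(1 - s),
      (a + s * (b - a) + t * (c - a)) =
        (a + (c - a) / 2) + s * (b - a - c) + s ^ 2 * ((a + c) / 2 - b) := by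
    intro s _
    rw [intervalIntegral.integral_add (Continuous.intervalIntegrable (by fun_prop) _ _)
      (Continuous.intervalIntegrable (by fun_prop) _ _)]
    simp only [intervalIntegrable_const, intervalIntegral.integral_add,
      intervalIntegral.integral_const, sub_zero, smul_eq_mul, intervalIntegral.integral_const_mul,
      intervalIntegral.integral_sub, intervalIntegral.integral_mul_const, integral_id, ne_eq,
      OfNat.ofNat_ne_zero, not_false_eq_true, zero_pow]
    ring
  rw [intervalIntegral.integral_congr hinner,
    intervalIntegral.integral_add (Continuous.intervalIntegrable (by fun_prop) _ _)
      (Continuous.intervalIntegrable (by fun_prop) _ _)]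
  simp only [intervalIntegrable_const, intervalIntegral.intervalIntegrable_id,
    IntervalIntegrable.mul_const, intervalIntegral.integral_add, intervalIntegral.integral_const,
    sub_zero, smul_eq_mul, one_mul, intervalIntegral.integral_div, intervalIntegral.integral_sub,
    intervalIntegral.integral_mul_const, integral_id, one_pow, ne_eq, OfNat.ofNat_ne_zero,
    not_false_eq_true, zero_pow, one_div, integral_pow, Nat.reduceAdd, Nat.cast_ofNat]
  ring

lemma le_setIntegral_unitTriangle_of_concaveOn {D : Set (ℝ × ℝ)} {f : ℝ × ℝ → ℝ}
    (hf : ConcaveOn ℝ D f) (h₀ : (0, 0) ∈ D) (h₁ : (1, 0) ∈ D) (h₂ : (0, 1) ∈ D)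
    (hint : IntegrableOn f unitTriangle) :
    (f (0, 0) + f (1, 0) + f (0, 1)) / 6 ≤ ∫ x in unitTriangle, f x := by
  rw [← setIntegral_unitTriangle_interpolation]
  refine setIntegral_mono_on ((integrableOn_unitCell_of_continuous (by fun_prop)).mono_set
    Set.inter_subset_left) hint measurableSet_unitTriangle ?_
  rintro ⟨s, t⟩ ⟨⟨hs, ht⟩, hst : s + t ≤ 1⟩
  have := le_map_add_add_of_concaveOn hf h₀ h₁ h₂ (sub_nonneg.2 hst) hs.1.le ht.1.le (by ring)
  simp only [Prod.smul_mk, Prod.mk_add_mk, smul_eq_mul, mul_zero, mul_one, zero_add,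
    add_zero] at this
  linarith

end UnitCell

section Tiling

variable {h : ℝ × ℝ → ℝ}

lemma integral_eq_four_mul_setIntegral_Ioi (hint : Integrable h)
    (habs : ∀ x y, h (|x|, |y|) = h (x, y)) :
    ∫ x, h x = 4 * ∫ x in Set.Ioi 0 ×ˢ Set.Ioi 0, h x := by
  have hinner : ∀ x : ℝ, ∫ y, h (x, y) = 2 * ∫ y in Set.Ioi 0, h (|x|, y) := fun x ↦ by
    rw [← integral_comp_abs (f := fun y ↦ h (|x|, y))]
    simp only [habs]
  rw [Measure.volume_eq_prod] at hint ⊢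
  rw [integral_prod _ hint, setIntegral_prod _ hint.integrableOn]
  simp only [hinner]
  rw [integral_comp_abs (f := fun x ↦ 2 * ∫ y in Set.Ioi 0, h (x, y)), integral_const_mul]
  ring

/-- The translate of the unit cell with lower left corner `p`. -/
def cell (p : ℕ × ℕ) : Set (ℝ × ℝ) :=
  Set.Ioc (p.1 : ℝ) (p.1 + 1 : ℕ) ×ˢ Set.Ioc (p.2 : ℝ) (p.2 + 1 : ℕ)

lemma pairwise_disjoint_cell : Pairwise (Function.onFun Disjoint cell) := by
  have hIoc : Pairwise (Function.onFun Disjoint fun i : ℕ ↦ Set.Ioc (i : ℝ) (i + 1 : ℕ)) :=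
    Nat.mono_cast.pairwise_disjoint_on_Ioc_succ
  intro p q hpq
  rw [Function.onFun, cell, cell, Set.disjoint_prod]
  by_cases hfst : p.1 = q.1
  · exact .inr (hIoc fun hsnd ↦ hpq (Prod.ext hfst hsnd))
  · exact .inl (hIoc hfst)

lemma setIntegral_cell (p : ℕ × ℕ) :
    ∫ x in cell p, h x = ∫ x in unitCell, h (((p.1 : ℝ), (p.2 : ℝ)) + x) := by
  have hpre : (((p.1 : ℝ), (p.2 : ℝ)) + ·) ⁻¹' cell p = unitCell := by
    ext x
    simp only [cell, unitCell, Set.mem_preimage, Set.mem_prod, Set.mem_Ioc, Prod.fst_add,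
      Prod.snd_add, lt_add_iff_pos_right, Nat.cast_add, Nat.cast_one, add_le_add_iff_left]
  rw [← hpre, (measurePreserving_add_left volume _).setIntegral_preimage_emb
    (measurableEmbedding_addLeft _)]

lemma sum_setIntegral_unitCell_le (hint : Integrable h) (h_nonneg : ∀ x, 0 ≤ h x)
    (S : Finset (ℕ × ℕ)) :
    ∑ p ∈ S, ∫ x in unitCell, h (((p.1 : ℝ), (p.2 : ℝ)) + x) ≤
      ∫ x in Set.Ioi 0 ×ˢ Set.Ioi 0, h x := by
  have hcell : ∀ p ∈ S, MeasurableSet (cell p) := fun _ _ ↦ measurableSet_Ioc.prod measurableSet_Ioc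
  have hsub : ⋃ p ∈ S, cell p ⊆ Set.Ioi 0 ×ˢ Set.Ioi 0 := Set.iUnion₂_subset fun p _ _ hx ↦
    ⟨p.1.cast_nonneg.trans_lt hx.1.1, p.2.cast_nonneg.trans_lt hx.2.1⟩
  simp only [← setIntegral_cell]
  rw [← integral_biUnion_finset S hcell (pairwise_disjoint_cell.set_pairwise _)
    fun _ _ ↦ hint.integrableOn]
  exact setIntegral_mono_set hint.integrableOn (.of_forall h_nonneg) hsub.eventuallyLE

lemma sum_antidiagonal_setIntegral_unitCell_le (hint : Integrable h) (h_nonneg : ∀ x, 0 ≤ h x)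
    (n : ℕ) :
    ∑ m ∈ range n, ∑ p ∈ antidiagonal m,
        ∫ x in unitCell, h (((p.1 : ℝ), (p.2 : ℝ)) + x) ≤
      ∫ x in Set.Ioi 0 ×ˢ Set.Ioi 0, h x := by
  have hdisj : Set.PairwiseDisjoint (range n : Set ℕ) fun m ↦ antidiagonal m := fun m _ l _ hml ↦
    Finset.disjoint_left.2 fun p hm hl ↦
      hml ((mem_antidiagonal.1 hm).symm.trans (mem_antidiagonal.1 hl))
  rw [← Finset.sum_biUnion hdisj]
  exact sum_setIntegral_unitCell_le hint h_nonneg _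

end Tiling

/-- Invariance under the generators of `W₄` of a function on `D`. -/
def IsW₄InvariantOn (D : Set (ℝ × ℝ)) (g : ℝ × ℝ → ℝ) : Prop :=
  ∀ x ∈ D, g (σ₄ x) = g x ∧ g (sw x) = g x

namespace IsW₄InvariantOn

variable {r x y : ℝ} {g : ℝ × ℝ → ℝ}

lemma sub_const {D : Set (ℝ × ℝ)} (hg : IsW₄InvariantOn D g) (c : ℝ) :
    IsW₄InvariantOn D fun p ↦ g p - c :=
  fun p hp ↦ ⟨congrArg (· - c) (hg p hp).1, congrArg (· - c) (hg p hp).2⟩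

lemma apply_swap (hg : IsW₄InvariantOn (diamond r) g) (h : (x, y) ∈ diamond r) :
    g (y, x) = g (x, y) :=
  (hg (x, y) h).2

lemma apply_neg_fst (hg : IsW₄InvariantOn (diamond r) g) (h : (x, y) ∈ diamond r) :
    g (-x, y) = g (x, y) := by
  rw [← hg.apply_swap h]
  exact (hg (y, x) (by rwa [mem_diamond, add_comm])).1

lemma apply_neg_snd (hg : IsW₄InvariantOn (diamond r) g) (h : (x, y) ∈ diamond r) :
    g (x, -y) = g (x, y) := by
  have hswap : (y, x) ∈ diamond r := by rwa [mem_diamond, add_comm]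
  have hneg : (-y, x) ∈ diamond r := by rwa [mem_diamond, abs_neg]
  rw [hg.apply_swap hneg, hg.apply_neg_fst hswap, hg.apply_swap h]

lemma apply_neg (hg : IsW₄InvariantOn (diamond r) g) {p : ℝ × ℝ} (hp : p ∈ diamond r) :
    g (-p) = g p := by
  have hneg : (p.1, -p.2) ∈ diamond r := by rwa [mem_diamond, abs_neg]
  exact (hg.apply_neg_fst hneg).trans (hg.apply_neg_snd hp)

lemma apply_abs (hg : IsW₄InvariantOn (diamond r) g) (h : (x, y) ∈ diamond r) :
    g (|x|, |y|) = g (x, y) := by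
  have hneg : (x, -y) ∈ diamond r := by rwa [mem_diamond, abs_neg]
  rcases abs_choice x with hx | hx <;> rcases abs_choice y with hy | hy <;>
    simp only [hx, hy, hg.apply_neg_fst h, hg.apply_neg_fst hneg, hg.apply_neg_snd h]

lemma apply_le_apply_zero (hg : IsW₄InvariantOn (diamond r) g) (hc : ConcaveOn ℝ (diamond r) g)
    {p : ℝ × ℝ} (hp : p ∈ diamond r) : g p ≤ g 0 := by
  have hmid : (0 : ℝ × ℝ) ∈ segment ℝ p (-p) := by
    simpa using midpoint_mem_segment (𝕜 := ℝ) p (-p)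
  simpa [hg.apply_neg hp] using hc.min_le_of_mem_segment hp (neg_mem_diamond.2 hp) hmid

lemma apply_vertex_le (hg : IsW₄InvariantOn (diamond r) g) (hc : ConcaveOn ℝ (diamond r) g)
    (hr : 0 < r) {p : ℝ × ℝ} (hp : p ∈ diamond r) : g (r, 0) ≤ g p := by
  have hright : (r, 0) ∈ diamond r := by simp [mem_diamond, abs_of_pos hr]
  have htop : (0, r) ∈ diamond r := by simp [mem_diamond, abs_of_pos hr]
  have hvertices : {(r, 0), (0, r), (-r, 0), (0, -r)} ⊆ diamond r := by
    rw [diamond_eq_convexHull hr]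
    exact subset_convexHull ℝ _
  rw [diamond_eq_convexHull hr] at hp
  obtain ⟨q, rfl | rfl | rfl | rfl, hle⟩ := hc.exists_le_of_mem_convexHull hvertices hp
  · exact hle
  · rwa [hg.apply_swap hright] at hle
  · rwa [hg.apply_neg_fst hright] at hle
  · rwa [hg.apply_neg_snd htop, hg.apply_swap hright] at hle

lemma apply_le_of_abs_fst_le (hg : IsW₄InvariantOn (diamond r) g)
    (hc : ConcaveOn ℝ (diamond r) g) {x' : ℝ} (hx : |x'| ≤ x) (h : (x, y) ∈ diamond r) :
    g (x, y) ≤ g (x', y) := by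
  have hneg : (-x, y) ∈ diamond r := by rwa [mem_diamond, abs_neg]
  have hmem : (x', y) ∈ segment ℝ (-x, y) (x, y) := by
    rw [← Prod.image_mk_segment_left]
    refine ⟨x', ?_, rfl⟩
    rw [segment_eq_Icc (by linarith [abs_nonneg x'])]
    exact abs_le.1 hx
  simpa [hg.apply_neg_fst h] using hc.min_le_of_mem_segment hneg h hmem

lemma apply_add_zero_le (hg : IsW₄InvariantOn (diamond r) g) (hc : ConcaveOn ℝ (diamond r) g)
    (hx : 0 ≤ x) (hy : 0 ≤ y) (h : (x, y) ∈ diamond r) : g (x + y, 0) ≤ g (x, y) := by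
  rw [mk_mem_diamond_of_nonneg hx hy] at h
  have hright : (x + y, 0) ∈ diamond r :=
    (mk_mem_diamond_of_nonneg (add_nonneg hx hy) le_rfl).2 (by rwa [add_zero])
  have htop : (0, x + y) ∈ diamond r :=
    (mk_mem_diamond_of_nonneg le_rfl (add_nonneg hx hy)).2 (by rwa [zero_add])
  have hmem : (x, y) ∈ segment ℝ (x + y, 0) (0, x + y) := by
    rcases (add_nonneg hx hy).eq_or_lt with h₀ | hpos
    · obtain ⟨rfl, rfl⟩ : x = 0 ∧ y = 0 := by constructor <;> linarith
      simp
    · refine ⟨x / (x + y), y / (x + y), by positivity, by positivity, by field_simp, ?_⟩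
      simp only [Prod.smul_mk, smul_eq_mul, mul_zero, Prod.mk_add_mk, add_zero, zero_add]
      ext <;> field_simp
  simpa [hg.apply_swap hright] using hc.min_le_of_mem_segment hright htop hmem

lemma isDiamondProfile {N : ℕ} (hg : IsW₄InvariantOn (diamond N) g)
    (hc : ConcaveOn ℝ (diamond N) g) : IsDiamondProfile (fun i j ↦ g (i, j)) N := by
  have hmem {i j : ℕ} (hij : i + j ≤ N) : ((i : ℝ), (j : ℝ)) ∈ diamond N :=
    (mk_mem_diamond_of_nonneg i.cast_nonneg j.cast_nonneg).2 (mod_cast hij)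
  refine ⟨fun i j hij ↦ ?_, fun i j hij ↦ ?_, fun i j hij ↦ ?_⟩
  · exact (hg.apply_swap (hmem hij)).symm
  · exact hg.apply_le_of_abs_fst_le hc (by rw [Nat.abs_cast]; exact mod_cast i.le_succ)
      (hmem (by omega))
  · simpa using hg.apply_add_zero_le hc i.cast_nonneg j.cast_nonneg (hmem hij)

end IsW₄InvariantOn

section Quadrature

variable {n N : ℕ} {g : ℝ × ℝ → ℝ}

lemma add_mem_diamond {i j : ℕ} {x : ℝ × ℝ} (h₁ : 0 ≤ x.1) (h₂ : 0 ≤ x.2)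
    (h : i + j + (x.1 + x.2) ≤ N) : ((i : ℝ), (j : ℝ)) + x ∈ diamond N :=
  (mk_mem_diamond_of_nonneg (by positivity) (by positivity)).2 (by linarith)

lemma integrableOn_comp_add_left {D S : Set (ℝ × ℝ)} (hint : Integrable (D.indicator g))
    (hS : MeasurableSet S) {c : ℝ × ℝ} (hSD : ∀ x ∈ S, c + x ∈ D) :
    IntegrableOn (fun x ↦ g (c + x)) S :=
  (hint.comp_add_left c).integrableOn.congr_fun
    (fun x hx ↦ Set.indicator_of_mem (hSD x hx) g) hS

lemma setIntegral_indicator_comp_add_left {D S : Set (ℝ × ℝ)} (hS : MeasurableSet S)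
    {c : ℝ × ℝ} (hSD : ∀ x ∈ S, c + x ∈ D) :
    ∫ x in S, D.indicator g (c + x) = ∫ x in S, g (c + x) :=
  setIntegral_congr_fun hS fun x hx ↦ Set.indicator_of_mem (hSD x hx) g

lemma cellRule_le_setIntegral_unitCell (hc : ConcaveOn ℝ (diamond N) g)
    (hint : Integrable ((diamond N).indicator g)) {p : ℕ × ℕ} (hp : p.1 + p.2 + 2 ≤ N) :
    cellRule (fun i j ↦ g (i, j)) p ≤
      ∫ x in unitCell, (diamond N).indicator g (((p.1 : ℝ), (p.2 : ℝ)) + x) := by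
  have hsub : ∀ x ∈ Set.Icc (0 : ℝ) 1 ×ˢ Set.Icc (0 : ℝ) 1,
      ((p.1 : ℝ), (p.2 : ℝ)) + x ∈ diamond N := fun x hx ↦ by
    have hN : (p.1 + p.2 + 2 : ℝ) ≤ N := mod_cast hp
    exact add_mem_diamond hx.1.1 hx.2.1 (by linarith [hx.1.2, hx.2.2])
  have hcell : ∀ x ∈ unitCell, ((p.1 : ℝ), (p.2 : ℝ)) + x ∈ diamond N := fun x hx ↦
    hsub x ⟨Set.Ioc_subset_Icc_self hx.1, Set.Ioc_subset_Icc_self hx.2⟩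
  rw [setIntegral_indicator_comp_add_left measurableSet_unitCell hcell]
  have := le_setIntegral_unitCell_of_concaveOn
    ((hc.translate_right _).subset hsub ((convex_Icc 0 1).prod (convex_Icc 0 1)))
    (integrableOn_comp_add_left hint measurableSet_unitCell hcell)
  simpa [cellRule] using this

lemma triangleRule_le_setIntegral_unitCell (hc : ConcaveOn ℝ (diamond N) g)
    (hint : Integrable ((diamond N).indicator g)) (hg : ∀ x ∈ diamond N, 0 ≤ g x) {p : ℕ × ℕ}
    (hp : p.1 + p.2 + 1 ≤ N) :
    triangleRule (fun i j ↦ g (i, j)) p ≤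
      ∫ x in unitCell, (diamond N).indicator g (((p.1 : ℝ), (p.2 : ℝ)) + x) := by
  have hN : (p.1 + p.2 + 1 : ℝ) ≤ N := mod_cast hp
  have hmem {x : ℝ × ℝ} (h₁ : 0 ≤ x.1) (h₂ : 0 ≤ x.2) (h : x.1 + x.2 ≤ 1) :
      ((p.1 : ℝ), (p.2 : ℝ)) + x ∈ diamond N := add_mem_diamond h₁ h₂ (by linarith)
  have htriangle : ∀ x ∈ unitTriangle, ((p.1 : ℝ), (p.2 : ℝ)) + x ∈ diamond N := fun x hx ↦
    hmem hx.1.1.1.le hx.1.2.1.le hx.2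
  calc triangleRule (fun i j ↦ g (i, j)) p
      ≤ ∫ x in unitTriangle, g (((p.1 : ℝ), (p.2 : ℝ)) + x) := by
        have := le_setIntegral_unitTriangle_of_concaveOn (hc.translate_right _)
          (hmem (x := (0, 0)) (by simp) (by simp) (by simp))
          (hmem (x := (1, 0)) (by simp) (by simp) (by simp))
          (hmem (x := (0, 1)) (by simp) (by simp) (by simp))
          (integrableOn_comp_add_left hint measurableSet_unitTriangle htriangle)
        simpa [triangleRule] using this
    _ = ∫ x in unitTriangle, (diamond N).indicator g (((p.1 : ℝ), (p.2 : ℝ)) + x) :=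
        (setIntegral_indicator_comp_add_left measurableSet_unitTriangle htriangle).symm
    _ ≤ ∫ x in unitCell, (diamond N).indicator g (((p.1 : ℝ), (p.2 : ℝ)) + x) :=
        setIntegral_mono_set (hint.comp_add_left _).integrableOn
          (.of_forall fun _ ↦ Set.indicator_nonneg hg _) Set.inter_subset_left.eventuallyLE

lemma IsW₄InvariantOn.four_mul_quadrantRule_le_setIntegral
    (hg : IsW₄InvariantOn (diamond (n + 1 : ℕ)) g) (hc : ConcaveOn ℝ (diamond (n + 1 : ℕ)) g)
    (hint : IntegrableOn g (diamond (n + 1 : ℕ))) (hnonneg : ∀ x ∈ diamond (n + 1 : ℕ), 0 ≤ g x) :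
    4 * quadrantRule (fun i j ↦ g (i, j)) n ≤ ∫ x in diamond (n + 1 : ℕ), g x := by
  have hmeas := (isCompact_diamond (n + 1 : ℕ)).measurableSet
  have hint' := hint.integrable_indicator hmeas
  have habs : ∀ x y, (diamond (n + 1 : ℕ)).indicator g (|x|, |y|) =
      (diamond (n + 1 : ℕ)).indicator g (x, y) := fun x y ↦ by
    by_cases h : (x, y) ∈ diamond (n + 1 : ℕ)
    · rw [Set.indicator_of_mem h, Set.indicator_of_mem (by simpa [mem_diamond] using h),
        hg.apply_abs h]
    · rw [Set.indicator_of_notMem h, Set.indicator_of_notMem (by simpa [mem_diamond] using h)]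
  rw [← integral_indicator hmeas, integral_eq_four_mul_setIntegral_Ioi hint' habs]
  gcongr
  refine le_trans ?_ (sum_antidiagonal_setIntegral_unitCell_le hint'
    (fun _ ↦ Set.indicator_nonneg hnonneg _) (n + 1))
  rw [quadrantRule, Finset.sum_range_succ]
  refine add_le_add (Finset.sum_le_sum fun m hm ↦ Finset.sum_le_sum fun p hp ↦ ?_)
    (Finset.sum_le_sum fun p hp ↦ ?_)
  · have hm' := Finset.mem_range.1 hm
    exact cellRule_le_setIntegral_unitCell hc hint' (by rw [mem_antidiagonal.1 hp]; omega)
  · exact triangleRule_le_setIntegral_unitCell hc hint' hnonneg (by rw [mem_antidiagonal.1 hp])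

end Quadrature

namespace IsW₄InvariantOn

variable {N : ℕ} {r : ℝ} {g : ℝ × ℝ → ℝ}

lemma integrableOn (hg : IsW₄InvariantOn (diamond r) g) (hc : ConcaveOn ℝ (diamond r) g)
    (hr : 0 < r) : IntegrableOn g (diamond r) :=
  integrableOn_of_concaveOn_of_bounded hc (isCompact_diamond r).measure_lt_top.ne fun _ hp ↦
    abs_le_max_abs_abs (hg.apply_vertex_le hc hr hp) (hg.apply_le_apply_zero hc hp)

lemma sum_latticePoint (hg : IsW₄InvariantOn (diamond N) g) :
    ∑ p ∈ intDiamond N, g (latticePoint p) = diamondSum (fun i j ↦ g (i, j)) N := by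
  rw [sum_intDiamond fun p hp ↦ ?_]
  · simp [latticePoint]
  · simpa [latticePoint, σ₄] using (hg _ (latticePoint_mem_diamond.2 hp)).1

lemma stability_of_nonneg {n : ℕ} (hg : IsW₄InvariantOn (diamond (n + 1 : ℕ)) g)
    (hc : ConcaveOn ℝ (diamond (n + 1 : ℕ)) g) (hnonneg : ∀ x ∈ diamond (n + 1 : ℕ), 0 ≤ g x) :
    4 / 3 * (g 0 - g ((n + 1 : ℕ), 0)) / (n + 2) ≤
      (2 * (n + 1) ^ 2 + 2 * (n + 1) + 1) * (∫ x in diamond (n + 1 : ℕ), g x) -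
        2 * (n + 1) ^ 2 * ∑ p ∈ intDiamond (n + 1), g (latticePoint p) := by
  have hrule := hg.four_mul_quadrantRule_le_setIntegral hc
    (hg.integrableOn hc (by positivity)) hnonneg
  have hprofile := (hg.isDiamondProfile hc).quadrantRule_stability
  simp only [Nat.cast_zero, Prod.mk_zero_zero] at hprofile
  rw [hg.sum_latticePoint]
  refine hprofile.trans ?_
  gcongr

theorem stability {n : ℕ} (hg : IsW₄InvariantOn (diamond (n + 1 : ℕ)) g)
    (hc : ConcaveOn ℝ (diamond (n + 1 : ℕ)) g) :
    4 / 3 * (g 0 - g ((n + 1 : ℕ), 0)) / (n + 2) ≤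
      (2 * (n + 1) ^ 2 + 2 * (n + 1) + 1) * (∫ x in diamond (n + 1 : ℕ), g x) -
        2 * (n + 1) ^ 2 * ∑ p ∈ intDiamond (n + 1), g (latticePoint p) := by
  have hpos : (0 : ℝ) < (n + 1 : ℕ) := by positivity
  generalize hv : g ((n + 1 : ℕ), 0) = v
  have hnonneg : ∀ x ∈ diamond (n + 1 : ℕ), 0 ≤ g x - v := fun x hx ↦
    sub_nonneg.2 (hv ▸ hg.apply_vertex_le hc hpos hx)
  have hconcave : ConcaveOn ℝ (diamond (n + 1 : ℕ)) fun x ↦ g x - v :=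
    hc.sub (convexOn_const v hc.1)
  have hshift := (hg.sub_const v).stability_of_nonneg hconcave hnonneg
  rw [integral_sub (hg.integrableOn hc hpos)
      (integrableOn_const (isCompact_diamond _).measure_lt_top.ne),
    setIntegral_const, volume_real_diamond hpos.le, Finset.sum_sub_distrib, Finset.sum_const,
    nsmul_eq_mul, card_intDiamond, hv] at hshift
  push_cast [smul_eq_mul, sub_self, sub_zero] at hshift ⊢
  linarith

theorem le_average_sub_average (hN : 1 ≤ N) (hg : IsW₄InvariantOn (diamond N) g)
    (hc : ConcaveOn ℝ (diamond N) g) :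
    4 / 3 / (N + 1) / (2 * N ^ 2 * (2 * N ^ 2 + 2 * N + 1)) * (g 0 - g (N, 0)) ≤
      (volume (diamond N)).toReal⁻¹ * (∫ x in diamond N, g x) -
        ((diamond N ∩ lat).ncard : ℝ)⁻¹ * ∑ᶠ x ∈ diamond N ∩ lat, g x := by
  obtain ⟨n, rfl⟩ := Nat.exists_eq_add_of_le' hN
  have hstability := hg.stability hc
  rw [finsum_mem_diamond_inter_lat, ncard_diamond_inter_lat, card_intDiamond, ← measureReal_def,
    volume_real_diamond (Nat.cast_nonneg _)]
  generalize ∫ x in diamond (n + 1 : ℕ), g x = I,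
    ∑ p ∈ intDiamond (n + 1), g (latticePoint p) = L, g 0 - g ((n + 1 : ℕ), 0) = d at *
  push_cast
  calc 4 / 3 / (n + 1 + 1) / (2 * (n + 1) ^ 2 * (2 * (n + 1) ^ 2 + 2 * (n + 1) + 1)) * d
      = 4 / 3 * d / (n + 2) / (2 * (n + 1) ^ 2 * (2 * (n + 1) ^ 2 + 2 * (n + 1) + 1)) := by
        field_simp
        ring
    _ ≤ ((2 * (n + 1) ^ 2 + 2 * (n + 1) + 1) * I - 2 * (n + 1) ^ 2 * L) /
          (2 * (n + 1) ^ 2 * (2 * (n + 1) ^ 2 + 2 * (n + 1) + 1)) := by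
        gcongr
    _ = (2 * (n + 1) ^ 2 : ℝ)⁻¹ * I - (2 * (n + 1) ^ 2 + 2 * (n + 1) + 1 : ℝ)⁻¹ * L := by
        field_simp

lemma eq_apply_zero_of_isAffineOn (hg : IsW₄InvariantOn (diamond r) g)
    (haffine : IsAffineOn (diamond r) g) {p : ℝ × ℝ} (hp : p ∈ diamond r) : g p = g 0 := by
  obtain ⟨l, c, hl⟩ := haffine
  have hzero : (0 : ℝ × ℝ) ∈ diamond r :=
    zero_mem_diamond.2 ((add_nonneg (abs_nonneg _) (abs_nonneg _)).trans hp)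
  have hneg := hg.apply_neg hp
  rw [hl _ (neg_mem_diamond.2 hp), hl p hp, map_neg] at hneg
  rw [hl p hp, hl 0 hzero, map_zero]
  linarith

lemma isAffineOn_of_apply_zero_le (hg : IsW₄InvariantOn (diamond r) g)
    (hc : ConcaveOn ℝ (diamond r) g) (hr : 0 < r) (h : g 0 ≤ g (r, 0)) :
    IsAffineOn (diamond r) g := by
  refine ⟨0, g 0, fun p hp ↦ ?_⟩
  rw [LinearMap.zero_apply, zero_add]
  exact (hg.apply_le_apply_zero hc hp).antisymm (h.trans (hg.apply_vertex_le hc hr hp))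

end IsW₄InvariantOn

lemma average_diamond_of_eqOn_const {N : ℕ} (hN : 1 ≤ N) {g : ℝ × ℝ → ℝ} {c : ℝ}
    (hg : ∀ x ∈ diamond N, g x = c) :
    (volume (diamond N)).toReal⁻¹ * (∫ x in diamond N, g x) = c := by
  have hvolume : volume.real (diamond N) ≠ 0 := by
    rw [volume_real_diamond N.cast_nonneg]
    positivity
  rw [setIntegral_congr_fun (isCompact_diamond N).measurableSet hg, setIntegral_const, smul_eq_mul,
    ← measureReal_def, inv_mul_cancel_left₀ hvolume]

lemma average_diamond_inter_lat_of_eqOn_const {N : ℕ} {g : ℝ × ℝ → ℝ} {c : ℝ}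
    (hg : ∀ x ∈ diamond N, g x = c) :
    ((diamond N ∩ lat).ncard : ℝ)⁻¹ * ∑ᶠ x ∈ diamond N ∩ lat, g x = c := by
  have hcard : ((intDiamond N).card : ℝ) ≠ 0 := by
    rw [card_intDiamond]
    positivity
  rw [finsum_mem_diamond_inter_lat, ncard_diamond_inter_lat,
    Finset.sum_congr rfl fun p hp ↦ hg _ (latticePoint_mem_diamond.2 hp), Finset.sum_const,
    nsmul_eq_mul, inv_mul_cancel_left₀ hcard]

theorem chow_polystable_X4_general {N : ℕ} (hN : 1 ≤ N) {g : ℝ × ℝ → ℝ}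
    (hc : ConcaveOn ℝ (diamond N) g) (hg : IsW₄InvariantOn (diamond N) g) :
    ((volume (diamond N)).toReal⁻¹ * (∫ x in diamond N, g x) ≥
        ((diamond N ∩ lat).ncard : ℝ)⁻¹ * ∑ᶠ x ∈ diamond N ∩ lat, g x) ∧
      ((volume (diamond N)).toReal⁻¹ * (∫ x in diamond N, g x) =
          ((diamond N ∩ lat).ncard : ℝ)⁻¹ * (∑ᶠ x ∈ diamond N ∩ lat, g x) ↔
        IsAffineOn (diamond N) g) := by
  have hpos : (0 : ℝ) < N := mod_cast hN
  have hgap := hg.le_average_sub_average hN hc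
  have hosc : 0 ≤ g 0 - g (N, 0) :=
    sub_nonneg.2 (hg.apply_vertex_le hc hpos (zero_mem_diamond.2 hpos.le))
  refine ⟨sub_nonneg.1 (le_trans (by positivity) hgap), fun heq ↦ ?_, fun haffine ↦ ?_⟩
  · rw [heq, sub_self] at hgap
    have := nonpos_of_mul_nonpos_right hgap (by positivity)
    exact hg.isAffineOn_of_apply_zero_le hc hpos (sub_nonpos.1 this)
  · have hconst : ∀ x ∈ diamond N, g x = g 0 := fun x ↦ hg.eq_apply_zero_of_isAffineOn haffine
    rw [average_diamond_of_eqOn_const hN hconst, average_diamond_inter_lat_of_eqOn_const hconst]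

/-- Ono's criterion for `X₄`: for every `W₄`-invariant `g ∈ PL(Δ₄;k)`, the average of `g`
over `kΔ₄` is at least the average of `g` over the lattice points of `kΔ₄`, with equality
iff `g` is affine. -/
theorem chow_polystable_X4 (k : ℕ) (hk : 1 ≤ k) (g : ℝ × ℝ → ℝ)
    (hPL : IsPL ((k : ℝ) • Δ₄) g)
    (hinv : ∀ x ∈ (k : ℝ) • Δ₄, g (σ₄ x) = g x ∧ g (sw x) = g x) :
    ((volume ((k : ℝ) • Δ₄)).toReal⁻¹ * (∫ x in (k : ℝ) • Δ₄, g x) ≥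
        ((((k : ℝ) • Δ₄) ∩ lat).ncard : ℝ)⁻¹ * ∑ᶠ x ∈ ((k : ℝ) • Δ₄) ∩ lat, g x) ∧
      ((volume ((k : ℝ) • Δ₄)).toReal⁻¹ * (∫ x in (k : ℝ) • Δ₄, g x) =
          ((((k : ℝ) • Δ₄) ∩ lat).ncard : ℝ)⁻¹ * (∑ᶠ x ∈ ((k : ℝ) • Δ₄) ∩ lat, g x) ↔
        IsAffineOn ((k : ℝ) • Δ₄) g) := by
  rw [smul_Δ₄ hk] at hPL hinv ⊢
  have hN : 1 ≤ 3 * k := by omega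
  exact chow_polystable_X4_general hN (hPL.concaveOn_diamond hN) hinv
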